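/- arXiv:2403.13172 — 4 statements merged into one kernel-verified Lean document; each statement's English description precedes it below -/
import Mathlib

section
/- Let T_1 be the tree on the 7 vertices {x, u₁, a₁, b₁, u₂, a₂, b₂} with edges xu₁, u₁a₁, u₁b₁, xu₂, u₂a₂, u₂b₂ (two 3-stars appended by a leaf each onto a common vertex x). Then γ^ID(T_1) = 5 = (2/3)·7 + 1/3. -/
open SimpleGraph

/-- The closed neighborhood `N[v]` of a vertex `v` in `G`. -/
def closedNbhd {V : Type*} (G : SimpleGraph V) (v : V) : Set V :=
  insert v (G.neighborSet v)

/-- `C` is an identifying code of `G`: it dominates every vertex and the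
closed neighborhoods of distinct vertices intersect `C` differently. -/
def IsIDCode {V : Type*} (G : SimpleGraph V) (C : Set V) : Prop :=
  (∀ v, (closedNbhd G v ∩ C).Nonempty) ∧
  ∀ u w : V, u ≠ w → closedNbhd G u ∩ C ≠ closedNbhd G w ∩ C

/-- The identification number `γ^ID(G)`: the minimum size of an identifying code. -/
noncomputable def idNum {V : Type*} [Fintype V] (G : SimpleGraph V) : ℕ :=
  sInf {k | ∃ C : Set V, C.ncard = k ∧ IsIDCode G C}

/-- `G` is identifiable (closed-twin-free). -/
def Identifiable {V : Type*} (G : SimpleGraph V) : Prop :=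
  ∀ u w : V, u ≠ w → closedNbhd G u ≠ closedNbhd G w

/-- The maximum degree of a finite graph `G`. -/
noncomputable def maxDeg {V : Type*} [Fintype V] (G : SimpleGraph V) : ℕ :=
  Finset.univ.sup fun v => (G.neighborSet v).ncard

/-- `S` is a dominating set of `G`. -/
def IsDomSet {V : Type*} (G : SimpleGraph V) (S : Set V) : Prop :=
  ∀ v, (closedNbhd G v ∩ S).Nonempty

/-- The domination number `γ(G)`. -/
noncomputable def domNum {V : Type*} [Fintype V] (G : SimpleGraph V) : ℕ :=
  sInf {k | ∃ S : Set V, S.ncard = k ∧ IsDomSet G S}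

/-- The star `K_{1,k}`: vertex `0` is adjacent to each of the `k` other vertices. -/
def starGraph (k : ℕ) : SimpleGraph (Fin (k + 1)) :=
  SimpleGraph.fromRel fun a _ => a = 0

/-- The graph obtained from `G'` by appending a star with `k` extra leaves onto the
vertex `v`: we add a new universal vertex `u = Sum.inr none` adjacent to `v`,
and `k` new leaves `Sum.inr (some i)` adjacent to `u` (so the star has `k + 1`
leaves in total, one of which is identified with `v`, i.e. a `(k+1)`-star is
appended by one of its leaves onto `v`). -/
def appendStar {V : Type*} (G' : SimpleGraph V) (v : V) (k : ℕ) :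
    SimpleGraph (V ⊕ Option (Fin k)) :=
  SimpleGraph.fromRel fun a b =>
    (∃ x y, a = Sum.inl x ∧ b = Sum.inl y ∧ G'.Adj x y) ∨
    (a = Sum.inl v ∧ b = Sum.inr none) ∨
    (∃ i, a = Sum.inr none ∧ b = Sum.inr (some i))

/-- The tree `T₁`: two 3-stars appended by a leaf each onto a common vertex `x = 0`;
`u₁ = 1`, `a₁ = 2`, `b₁ = 3`, `u₂ = 4`, `a₂ = 5`, `b₂ = 6`. -/
def T1graph : SimpleGraph (Fin 7) :=
  SimpleGraph.fromEdgeSet {s(0, 1), s(1, 2), s(1, 3), s(0, 4), s(4, 5), s(4, 6)}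

/-- Adjacency-closed neighborhoods of `T₁` as explicit finsets. -/
def T1nbhd (v : Fin 7) : Finset (Fin 7) :=
  ![{0, 1, 4}, {0, 1, 2, 3}, {1, 2}, {1, 3}, {0, 4, 5, 6}, {4, 5}, {4, 6}] v

lemma T1closedNbhd (v : Fin 7) : closedNbhd T1graph v = (T1nbhd v : Set (Fin 7)) := by
  ext w
  simp only [closedNbhd, T1graph, Set.mem_insert_iff, SimpleGraph.mem_neighborSet,
    SimpleGraph.fromEdgeSet_adj, Set.mem_singleton_iff, Finset.mem_coe]
  revert v w
  decide

lemma T1code_iff (C : Finset (Fin 7)) : IsIDCode T1graph (C : Set (Fin 7)) ↔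
    (∀ v, (T1nbhd v ∩ C).Nonempty) ∧
      ∀ u w : Fin 7, u ≠ w → T1nbhd u ∩ C ≠ T1nbhd w ∩ C := by
  simp only [IsIDCode, T1closedNbhd, ← Finset.coe_inter, Finset.coe_nonempty, ne_eq,
    Finset.coe_inj]

set_option maxRecDepth 100000 in
lemma T1lower : ∀ C : Finset (Fin 7), ((∀ v, (T1nbhd v ∩ C).Nonempty) ∧
      ∀ u w : Fin 7, u ≠ w → T1nbhd u ∩ C ≠ T1nbhd w ∩ C) → 5 ≤ C.card := by
  decide +kernel

lemma T1idNum : idNum T1graph = 5 := by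
  apply IsLeast.csInf_eq
  constructor
  · refine ⟨(({0, 1, 2, 4, 5} : Finset (Fin 7)) : Set (Fin 7)), ?_, ?_⟩
    · rw [Set.ncard_coe_finset]; rfl
    · rw [T1code_iff]; decide +kernel
  · rintro k ⟨C, rfl, hC⟩
    obtain ⟨D, rfl⟩ := C.toFinite.exists_finset_coe
    rw [Set.ncard_coe_finset]
    exact T1lower D ((T1code_iff D).1 hC)

/-- `γ^ID(T₁) = 5 = (2/3)·7 + 1/3`. -/
theorem stmt_14 : idNum T1graph = 5 ∧ (idNum T1graph : ℝ) = 2 / 3 * 7 + 1 / 3 := by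
  rw [T1idNum]
  norm_num
end

section
/- Let T_7 be the tree on the 13 vertices {c, v₁, v₂, v₃, a₁, b₁, a₂, b₂, a₃, b₃, u, p, q} with edges cv₁, cv₂, cv₃, v₁a₁, v₁b₁, v₂a₂, v₂b₂, v₃a₃, v₃b₃, a₁u, up, uq (three 3-stars appended by a leaf each onto a common center c, and one further 3-star appended by a leaf onto the leaf a₁). Then γ^ID(T_7) = 9 = (2/3)·13 + 1/3. -/
open SimpleGraph

/-- The tree `T₇`: three 3-stars appended by a leaf each onto a common center `c = 0`
(with `v₁ = 1, v₂ = 2, v₃ = 3`, leaves `a₁ = 4, b₁ = 5, a₂ = 6, b₂ = 7, a₃ = 8,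
b₃ = 9`), and one further 3-star (`u = 10, p = 11, q = 12`) appended by a leaf onto
the leaf `a₁`. -/
def T7graph : SimpleGraph (Fin 13) :=
  SimpleGraph.fromEdgeSet
    {s(0, 1), s(0, 2), s(0, 3), s(1, 4), s(1, 5), s(2, 6), s(2, 7),
     s(3, 8), s(3, 9), s(4, 10), s(10, 11), s(10, 12)}

/-- Boolean closed-neighborhood relation of `T₇`, as an explicit list of neighborhoods. -/
def t7nb (v w : Fin 13) : Bool :=
  decide (v = w) || decide ((v, w) ∈ ([(0, 1), (0, 2), (0, 3), (1, 4), (1, 5), (2, 6), (2, 7),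
     (3, 8), (3, 9), (4, 10), (10, 11), (10, 12)] : List (Fin 13 × Fin 13))) ||
  decide ((w, v) ∈ ([(0, 1), (0, 2), (0, 3), (1, 4), (1, 5), (2, 6), (2, 7),
     (3, 8), (3, 9), (4, 10), (10, 11), (10, 12)] : List (Fin 13 × Fin 13)))

theorem t7nb_iff (v w : Fin 13) : w ∈ closedNbhd T7graph v ↔ t7nb v w = true := by
  have : w ∈ closedNbhd T7graph v ↔ (w = v ∨
    ((s(v, w) = s(0, 1) ∨ s(v, w) = s(0, 2) ∨ s(v, w) = s(0, 3) ∨ s(v, w) = s(1, 4) ∨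
      s(v, w) = s(1, 5) ∨ s(v, w) = s(2, 6) ∨ s(v, w) = s(2, 7) ∨ s(v, w) = s(3, 8) ∨
      s(v, w) = s(3, 9) ∨ s(v, w) = s(4, 10) ∨ s(v, w) = s(10, 11) ∨ s(v, w) = s(10, 12))
      ∧ v ≠ w)) := Iff.rfl
  rw [this]
  clear this
  revert v w
  decide

theorem t7_dom {C : Set (Fin 13)} (hC : IsIDCode T7graph C) (v : Fin 13) :
    ∃ x, x ∈ C ∧ t7nb v x = true := by
  obtain ⟨x, hx, hxC⟩ := hC.1 v
  exact ⟨x, hxC, (t7nb_iff v x).1 hx⟩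

theorem t7_sep {C : Set (Fin 13)} (hC : IsIDCode T7graph C) (u w : Fin 13) (h : u ≠ w) :
    ∃ x, x ∈ C ∧ t7nb u x ≠ t7nb w x := by
  by_contra hcon
  push Not at hcon
  apply hC.2 u w h
  ext x
  simp only [Set.mem_inter_iff, t7nb_iff]
  constructor
  · rintro ⟨h1, h2⟩
    exact ⟨hcon x h2 ▸ h1, h2⟩
  · rintro ⟨h1, h2⟩
    exact ⟨(hcon x h2).symm ▸ h1, h2⟩

theorem t7_code : IsIDCode T7graph
    (({0, 4, 1, 2, 6, 3, 8, 10, 11} : Finset (Fin 13)) : Set (Fin 13)) := by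
  constructor
  · intro v
    have : ∀ v : Fin 13, ∃ x, t7nb v x = true ∧
        x ∈ ({0, 4, 1, 2, 6, 3, 8, 10, 11} : Finset (Fin 13)) := by decide
    obtain ⟨x, h1, h2⟩ := this v
    exact ⟨x, (t7nb_iff v x).2 h1, h2⟩
  · intro u w huw heq
    have : ∀ u w : Fin 13, u ≠ w → ∃ x, t7nb u x ≠ t7nb w x ∧
        x ∈ ({0, 4, 1, 2, 6, 3, 8, 10, 11} : Finset (Fin 13)) := by decide
    obtain ⟨x, h1, h2⟩ := this u w huw
    have h3 := Set.ext_iff.1 heq x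
    simp only [Set.mem_inter_iff, t7nb_iff, Finset.mem_coe, h2, and_true] at h3
    exact h1 (Bool.eq_iff_iff.2 h3)

/-- If a member of `C` satisfies `p`, the indicator sum over `p` is positive. -/
theorem t7_clause {y : Fin 13 → ℕ} {C : Set (Fin 13)} (hy : ∀ i, i ∈ C → y i = 1)
    {p : Fin 13 → Prop} [DecidablePred p] (h : ∃ x, x ∈ C ∧ p x) (S : List (Fin 13))
    (hS : ∀ x, p x → x ∈ S) : 1 ≤ (S.map y).sum := by
  obtain ⟨x, hx, hp⟩ := h
  rw [← hy x hx]
  exact List.le_sum_of_mem (List.mem_map_of_mem (hS x hp))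

theorem t7_lower {C : Set (Fin 13)} (hC : IsIDCode T7graph C) : 9 ≤ C.ncard := by
  classical
  obtain ⟨y, hyd⟩ : ∃ y : Fin 13 → ℕ, y = fun i => if i ∈ C then 1 else 0 := ⟨_, rfl⟩
  have hy : ∀ i, i ∈ C → y i = 1 := fun i hi => by simp [hyd, hi]
  have hle : ∀ i, y i ≤ 1 := fun i => by rw [hyd]; dsimp only; split <;> omega
  have hcard : C.ncard = ∑ i, y i := by
    rw [hyd, Set.ncard_eq_toFinset_card', Finset.sum_boole]
    simp only [Nat.cast_id]
    congr 1
    ext i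
    simp
  have d5 := t7_clause hy (t7_dom hC 5) [1, 5] (by decide)
  have d6 := t7_clause hy (t7_dom hC 6) [2, 6] (by decide)
  have d7 := t7_clause hy (t7_dom hC 7) [2, 7] (by decide)
  have d8 := t7_clause hy (t7_dom hC 8) [3, 8] (by decide)
  have d9 := t7_clause hy (t7_dom hC 9) [3, 9] (by decide)
  have d11 := t7_clause hy (t7_dom hC 11) [10, 11] (by decide)
  have d12 := t7_clause hy (t7_dom hC 12) [10, 12] (by decide)
  have d4 := t7_clause hy (t7_dom hC 4) [1, 4, 10] (by decide)
  have d0 := t7_clause hy (t7_dom hC 0) [0, 1, 2, 3] (by decide)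
  have s67 := t7_clause hy (t7_sep hC 6 7 (by decide)) [6, 7] (by decide)
  have s89 := t7_clause hy (t7_sep hC 8 9 (by decide)) [8, 9] (by decide)
  have s1112 := t7_clause hy (t7_sep hC 11 12 (by decide)) [11, 12] (by decide)
  have s62 := t7_clause hy (t7_sep hC 6 2 (by decide)) [0, 7] (by decide)
  have s72 := t7_clause hy (t7_sep hC 7 2 (by decide)) [0, 6] (by decide)
  have s83 := t7_clause hy (t7_sep hC 8 3 (by decide)) [0, 9] (by decide)
  have s93 := t7_clause hy (t7_sep hC 9 3 (by decide)) [0, 8] (by decide)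
  have s1110 := t7_clause hy (t7_sep hC 11 10 (by decide)) [4, 12] (by decide)
  have s1210 := t7_clause hy (t7_sep hC 12 10 (by decide)) [4, 11] (by decide)
  have s51 := t7_clause hy (t7_sep hC 5 1 (by decide)) [0, 4] (by decide)
  have s41 := t7_clause hy (t7_sep hC 4 1 (by decide)) [0, 5, 10] (by decide)
  have s45 := t7_clause hy (t7_sep hC 4 5 (by decide)) [4, 5, 10] (by decide)
  have s05 := t7_clause hy (t7_sep hC 0 5 (by decide)) [0, 2, 3, 5] (by decide)
  simp only [List.map_cons, List.map_nil, List.sum_cons, List.sum_nil] at *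
  simp only [Fin.sum_univ_ofNat] at hcard
  rw [hcard]
  have h0 := hle 0
  have h1 := hle 1
  have h2 := hle 2
  have h3 := hle 3
  have h4 := hle 4
  have h5 := hle 5
  have h6 := hle 6
  have h7 := hle 7
  have h8 := hle 8
  have h9 := hle 9
  have h10 := hle 10
  have h11 := hle 11
  have h12 := hle 12
  clear hcard hyd hy hle
  rcases (by omega : y 0 = 0 ∨ y 0 = 1) with e0 | e0 <;>
  rcases (by omega : y 4 = 0 ∨ y 4 = 1) with e4 | e4 <;>
  rcases (by omega : y 10 = 0 ∨ y 10 = 1) with e10 | e10 <;>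
  rcases (by omega : y 1 = 0 ∨ y 1 = 1) with e1 | e1 <;>
  rcases (by omega : y 2 = 0 ∨ y 2 = 1) with e2 | e2 <;>
  rcases (by omega : y 3 = 0 ∨ y 3 = 1) with e3 | e3 <;>
  omega

theorem t7_idNum : idNum T7graph = 9 := by
  apply le_antisymm
  · exact Nat.sInf_le ⟨_, by rw [Set.ncard_coe_finset]; decide, t7_code⟩
  · refine le_csInf ⟨_, _, rfl, t7_code⟩ ?_
    rintro k ⟨C, rfl, hC⟩
    exact t7_lower hC

/-- `γ^ID(T₇) = 9 = (2/3)·13 + 1/3`. -/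
theorem stmt_15 : idNum T7graph = 9 ∧ (idNum T7graph : ℝ) = 2 / 3 * 13 + 1 / 3 := by
  rw [t7_idNum]
  norm_num
end

section
/- For all integers Δ ≥ 4 and t ≥ 3, there exists a tree G of order n = t(Δ−2)Δ + 2t with maximum degree Δ such that γ^ID(G) = t((Δ−2)(Δ−1) + 1); moreover, this value satisfies γ^ID(G) > ((Δ−1)/Δ)·n − n/Δ². -/
open SimpleGraph

inductive Vx (t m k : ℕ) : Type
  | P : Fin t → Vx t m k
  | S : Fin t → Vx t m k
  | U : Fin t → Fin m → Vx t m k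
  | L : Fin t → Fin m → Fin k → Vx t m k

namespace Vx

variable {t m k : ℕ}

def eqv : Vx t m k ≃ Fin t × (Bool ⊕ (Fin m × Option (Fin k))) where
  toFun v := match v with
    | P i => (i, Sum.inl false)
    | S i => (i, Sum.inl true)
    | U i j => (i, Sum.inr (j, none))
    | L i j l => (i, Sum.inr (j, some l))
  invFun v := match v with
    | (i, Sum.inl false) => P i
    | (i, Sum.inl true) => S i
    | (i, Sum.inr (j, none)) => U i j
    | (i, Sum.inr (j, some l)) => L i j l
  left_inv v := by cases v <;> rfl
  right_inv v := by
    obtain ⟨i, (_ | _) | ⟨j, _ | l⟩⟩ := v <;> rfl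

noncomputable instance : Fintype (Vx t m k) := Fintype.ofEquiv _ eqv.symm

theorem sum_eq (f : Vx t m k → ℕ) :
    ∑ v, f v = ∑ i, (f (P i) + f (S i) + ∑ j, (f (U i j) + ∑ l, f (L i j l))) := by
  rw [← eqv.symm.sum_comp f, Fintype.sum_prod_type]
  refine Finset.sum_congr rfl fun i _ => ?_
  rw [Fintype.sum_sum_type, Fintype.sum_prod_type, Fintype.sum_bool, add_comm (f _) (f _)]
  simp only [Fintype.sum_option]
  rfl

theorem card_eq : Fintype.card (Vx t m k) = t * (2 + m * (k + 1)) := by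
  rw [Fintype.card_congr eqv]
  simp

/-- the parent of a vertex in the tree rooted at the first path vertex -/
def par : Vx t m k → Vx t m k
  | P i => P ⟨i.1 - 1, by omega⟩
  | S i => P i
  | U i j => if j.1 = 0 then S i else P i
  | L i j _ => U i j

def rk : Vx t m k → ℕ
  | P i => i.1
  | S i => i.1 + 1
  | U i _ => i.1 + 2
  | L i _ _ => i.1 + 3

/-- the tree `T_{t,Δ}` -/
def T (t m k : ℕ) : SimpleGraph (Vx t m k) := SimpleGraph.fromRel fun a b => par a = b

theorem T_adj (a b : Vx t m k) : (T t m k).Adj a b ↔ a ≠ b ∧ (par a = b ∨ par b = a) :=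
  SimpleGraph.fromRel_adj _ _ _

theorem mem_nb (a b : Vx t m k) :
    b ∈ closedNbhd (T t m k) a ↔ b = a ∨ par a = b ∨ par b = a := by
  simp only [closedNbhd, Set.mem_insert_iff, SimpleGraph.mem_neighborSet, T_adj]
  by_cases h : b = a
  · simp [h]
  · simp [h, Ne.symm h]

theorem isTree_of_par {V : Type} [Fintype V] (G : SimpleGraph V) (f : V → V) (h : V → ℕ) (r : V)
    (hG : ∀ a b, G.Adj a b ↔ a ≠ b ∧ (f a = b ∨ f b = a)) (hr : f r = r)
    (hlt : ∀ v, v ≠ r → h (f v) < h v) : G.IsTree := by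
  classical
  have hreach : ∀ n v, h v = n → G.Reachable v r := by
    intro n
    induction n using Nat.strong_induction_on with
    | _ n ih =>
      intro v hv
      by_cases hvr : v = r
      · rw [hvr]
      · have h1 := hlt v hvr
        have h2 : G.Adj v (f v) := by
          rw [hG]
          refine ⟨fun h => ?_, Or.inl rfl⟩
          rw [← h] at h1; omega
        exact h2.reachable.trans (ih _ (hv ▸ h1) _ rfl)
  have hc : G.Connected := by
    haveI : Nonempty V := ⟨r⟩
    exact ⟨fun a b => (hreach _ a rfl).trans (hreach _ b rfl).symm⟩
  rw [SimpleGraph.isTree_iff_connected_and_card]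
  refine ⟨hc, le_antisymm ?_ hc.card_vert_le_card_edgeSet_add_one⟩
  have hsub : G.edgeSet ⊆ (fun v => s(v, f v)) '' ({r}ᶜ : Set V) := by
    intro e
    induction e with
    | _ a b =>
      intro he
      rw [SimpleGraph.mem_edgeSet, hG] at he
      obtain ⟨hne, he | he⟩ := he
      · refine ⟨a, ?_, by simp [he]⟩
        rintro rfl
        exact hne (hr.symm.trans he)
      · refine ⟨b, ?_, by simp [he, Sym2.eq_swap]⟩
        rintro rfl
        exact hne (he.symm.trans hr)
  have h1 := (Set.ncard_le_ncard hsub (Set.toFinite _)).trans (Set.ncard_image_le (Set.toFinite _))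
  have h2 := Set.ncard_add_ncard_compl ({r} : Set V)
  rw [Set.ncard_singleton] at h2
  rw [← Nat.card_coe_set_eq] at h1
  omega

theorem T_isTree (ht : 0 < t) : (T t m k).IsTree := by
  refine isTree_of_par _ par rk (P ⟨0, ht⟩) T_adj rfl ?_
  rintro (i | i | ⟨i, j⟩ | ⟨i, j, l⟩) h
  · have : i.1 ≠ 0 := fun h0 => h (by congr 1; exact Fin.ext h0)
    simp only [par, rk]; omega
  · simp [par, rk]
  · simp only [par]; split_ifs <;> simp [rk]
  · simp [par, rk]

theorem T_center (i : Fin t) (j : Fin m) :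
    ((T t m k).neighborSet (U i j)).ncard = k + 1 := by
  have : (T t m k).neighborSet (U i j) = insert (par (U i j)) (Set.range (L i j)) := by
    ext v
    rw [SimpleGraph.mem_neighborSet, T_adj]
    cases v <;> simp [par] <;> split_ifs <;> simp <;> grind
  rw [this, Set.ncard_insert_of_notMem, ← Set.image_univ, Set.ncard_image_of_injective,
    Set.ncard_univ, Nat.card_eq_fintype_card, Fintype.card_fin]
  · intro a b h; simpa using h
  · simp only [par]; split_ifs <;> simp

theorem T_deg_le (hm : 1 ≤ m) (hk : m + 1 ≤ k) (v : Vx t m k) :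
    ((T t m k).neighborSet v).ncard ≤ k + 1 := by
  obtain i | i | ⟨i, j⟩ | ⟨i, j, l⟩ := v
  · have hsub : (T t m k).neighborSet (P i) ⊆ insert (par (P i))
        (insert (if h : i.1 + 1 < t then P ⟨i.1 + 1, h⟩ else P i)
          (Set.range fun j : Fin m => if j.1 = 0 then S i else U i j)) := by
      intro v
      rw [SimpleGraph.mem_neighborSet, T_adj]
      rintro ⟨hne, h | h⟩
      · exact Or.inl h.symm
      · right
        obtain i' | i' | ⟨i', j⟩ | ⟨i', j, l⟩ := v
        · left
          simp only [par, P.injEq, Fin.ext_iff, ne_eq] at h hne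
          have : i'.1 = i.1 + 1 := by omega
          rw [dif_pos (by omega)]
          congr 1; exact Fin.ext this
        · right
          simp only [par, P.injEq] at h
          subst h
          exact ⟨⟨0, hm⟩, by simp⟩
        · right
          simp only [par] at h
          split_ifs at h with h0
          simp only [P.injEq] at h
          subst h
          exact ⟨j, by simp [h0]⟩
        · simp [par] at h
    refine (Set.ncard_le_ncard hsub (Set.toFinite _)).trans ?_
    refine (Set.ncard_insert_le _ _).trans ?_
    have h1 := Set.ncard_insert_le (if h : i.1 + 1 < t then P ⟨i.1 + 1, h⟩ else P i)
          (Set.range fun j : Fin m => (if j.1 = 0 then S i else U i j : Vx t m k))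
    have h2 : (Set.range fun j : Fin m => (if j.1 = 0 then S i else U i j : Vx t m k)).ncard ≤ m := by
      rw [← Set.image_univ]
      refine (Set.ncard_image_le (Set.toFinite _)).trans ?_
      simp [Set.ncard_univ]
    omega
  · have hsub : (T t m k).neighborSet (S i) ⊆ {P i, U i ⟨0, hm⟩} := by
      intro v
      rw [SimpleGraph.mem_neighborSet, T_adj]
      rintro ⟨hne, h | h⟩
      · exact Or.inl h.symm
      · right
        obtain i' | i' | ⟨i', j⟩ | ⟨i', j, l⟩ := v <;> simp only [par, reduceCtorEq] at h
        split_ifs at h with h0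
        simp only [S.injEq] at h
        subst h
        simp only [Set.mem_singleton_iff, U.injEq, true_and]
        exact Fin.ext h0
    refine (Set.ncard_le_ncard hsub (Set.toFinite _)).trans ?_
    have := Set.ncard_insert_le (P i) {(U i ⟨0, hm⟩ : Vx t m k)}
    rw [Set.ncard_singleton] at this
    omega
  · exact (T_center i j).le
  · have hsub : (T t m k).neighborSet (L i j l) ⊆ {U i j} := by
      intro v
      rw [SimpleGraph.mem_neighborSet, T_adj]
      rintro ⟨hne, h | h⟩
      · exact h.symm
      · obtain i' | i' | ⟨i', j⟩ | ⟨i', j, l⟩ := v <;> simp only [par, reduceCtorEq] at h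
        split_ifs at h
    have := Set.ncard_le_ncard hsub (Set.toFinite _)
    rw [Set.ncard_singleton] at this
    omega

/-! Closed neighbourhoods -/

theorem mem_nb_L (i : Fin t) (j : Fin m) (l : Fin k) (v : Vx t m k) :
    v ∈ closedNbhd (T t m k) (L i j l) ↔ v = L i j l ∨ v = U i j := by
  rw [mem_nb]
  obtain i' | i' | ⟨i', j'⟩ | ⟨i', j', l'⟩ := v <;> simp [par]
  · split_ifs <;> simp <;> grind

theorem L_mem_nb (i : Fin t) (j : Fin m) (l : Fin k) (v : Vx t m k) :
    L i j l ∈ closedNbhd (T t m k) v ↔ v = L i j l ∨ v = U i j := by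
  rw [← mem_nb_L, mem_nb, mem_nb]
  constructor <;> (rintro (h | h | h) <;> simp [h])

theorem P_mem_nb_P (i x : Fin t) :
    P x ∈ closedNbhd (T t m k) (P i) ↔ x.1 ≤ i.1 + 1 ∧ i.1 ≤ x.1 + 1 := by
  rw [mem_nb]
  simp only [par, P.injEq, Fin.ext_iff]
  omega

theorem P_mem_nb_S (i x : Fin t) :
    P x ∈ closedNbhd (T t m k) (S i) ↔ x = i := by
  rw [mem_nb]
  simp [par, eq_comm]

theorem mem_nb_S (hm : 1 ≤ m) (i : Fin t) (v : Vx t m k) :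
    v ∈ closedNbhd (T t m k) (S i) ↔ v = S i ∨ v = P i ∨ v = U i ⟨0, hm⟩ := by
  rw [mem_nb]
  obtain i' | i' | ⟨i', j'⟩ | ⟨i', j', l'⟩ := v <;> simp [par]
  · exact eq_comm
  · split_ifs with h <;> simp [Fin.ext_iff, h]

/-- the optimal code -/
def code (t m k : ℕ) : Set (Vx t m k) := {v | (∃ i, v = P i) ∨ ∃ i j l, v = L i j l}

theorem P_code (i : Fin t) : P i ∈ code t m k := Or.inl ⟨i, rfl⟩
theorem L_code (i : Fin t) (j : Fin m) (l : Fin k) : L i j l ∈ code t m k := Or.inr ⟨i, j, l, rfl⟩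

theorem ncard_eq_sum (C : Set (Vx t m k)) [DecidablePred (· ∈ C)] :
    C.ncard = ∑ v, if v ∈ C then 1 else 0 := by
  classical
  rw [Set.ncard_eq_toFinset_card', ← Set.filter_mem_univ_eq_toFinset, Finset.card_filter]

theorem code_ncard : (code t m k).ncard = t * (m * k + 1) := by
  classical
  rw [ncard_eq_sum, sum_eq]
  simp [code]
  ring_nf
  tauto

theorem code_isIDCode (ht : 3 ≤ t) (hk : 2 ≤ k) : IsIDCode (T t m k) (code t m k) := by
  constructor
  · rintro (i | i | ⟨i, j⟩ | ⟨i, j, l⟩)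
    · exact ⟨P i, by rw [P_mem_nb_P]; omega, P_code i⟩
    · exact ⟨P i, by rw [P_mem_nb_S], P_code i⟩
    · exact ⟨L i j ⟨0, by omega⟩, by rw [L_mem_nb]; simp, L_code _ _ _⟩
    · exact ⟨L i j l, by rw [L_mem_nb]; simp, L_code _ _ _⟩
  · intro u w hne heq
    have hP : ∀ i, P i ∈ closedNbhd (T t m k) u ↔ P i ∈ closedNbhd (T t m k) w := fun i =>
      ⟨fun h => ((heq ▸ ⟨h, P_code i⟩ : P i ∈ closedNbhd (T t m k) w ∩ code t m k)).1,
       fun h => ((heq ▸ ⟨h, P_code i⟩ : P i ∈ closedNbhd (T t m k) u ∩ code t m k)).1⟩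
    have hL : ∀ i j l, (u = L i j l ∨ u = U i j) ↔ (w = L i j l ∨ w = U i j) := by
      intro i j l
      rw [← L_mem_nb, ← L_mem_nb]
      exact ⟨fun h => ((heq ▸ ⟨h, L_code i j l⟩ : L i j l ∈ closedNbhd (T t m k) w ∩ code t m k)).1,
       fun h => ((heq ▸ ⟨h, L_code i j l⟩ : L i j l ∈ closedNbhd (T t m k) u ∩ code t m k)).1⟩
    clear heq
    have key : ∀ u w : Vx t m k, u ≠ w →
        (∀ i j l, (u = L i j l ∨ u = U i j) ↔ (w = L i j l ∨ w = U i j)) →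
        (∃ i, u = P i) ∨ (∃ i, u = S i) := by
      clear hL hP hne u w
      rintro u w hne hL
      have other : ∀ l : Fin k, ∃ l' : Fin k, l' ≠ l := by
        intro l
        haveI : Nontrivial (Fin k) := Fin.nontrivial_iff_two_le.2 hk
        exact exists_ne l
      obtain i | i | ⟨i, j⟩ | ⟨i, j, l⟩ := u
      · simp
      · simp
      · exfalso
        obtain ⟨l', hl'⟩ := other ⟨0, by omega⟩
        have h1 := (hL i j ⟨0, by omega⟩).1 (Or.inr rfl)
        have h2 := (hL i j l').1 (Or.inr rfl)
        rcases h1 with rfl | rfl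
        · rcases h2 with h2 | h2
          · simp at h2; exact hl' h2.symm
          · simp at h2
        · exact hne rfl
      · exfalso
        obtain ⟨l', hl'⟩ := other l
        have h1 := (hL i j l).1 (Or.inl rfl)
        rcases h1 with rfl | rfl
        · exact hne rfl
        · have h2 := (hL i j l').2 (Or.inr rfl)
          simp at h2; exact hl' h2.symm
    have hu := key u w hne hL
    have hw := key w u hne.symm fun i j l => (hL i j l).symm
    have ps : ∀ a b : Fin t, ¬ ∀ i, P i ∈ closedNbhd (T t m k) (P a) ↔
        P i ∈ closedNbhd (T t m k) (S b) := by
      intro a b h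
      simp only [P_mem_nb_P, P_mem_nb_S, Fin.ext_iff] at h
      have h0 := h a
      by_cases ha : a.1 = 0
      · have := h ⟨a.1 + 1, by omega⟩
        simp only at this
        omega
      · have := h ⟨a.1 - 1, by omega⟩
        simp only at this
        omega
    rcases hu with ⟨a, rfl⟩ | ⟨a, rfl⟩ <;> rcases hw with ⟨b, rfl⟩ | ⟨b, rfl⟩
    · have pp : ∀ a b : Fin t, a.1 < b.1 → ¬ ∀ i, P i ∈ closedNbhd (T t m k) (P a) ↔
        P i ∈ closedNbhd (T t m k) (P b) := by
        intro a b hab h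
        simp only [P_mem_nb_P] at h
        have h0 := h a
        by_cases ha : a.1 = 0
        · have := h ⟨b.1 + 1 - (b.1 + 1) / t, by
            have := b.2
            rcases Nat.lt_or_ge (b.1 + 1) t with h | h
            · rw [Nat.div_eq_of_lt h]; omega
            · have : b.1 + 1 = t := by omega
              rw [this, Nat.div_self (by omega)]; omega⟩
          have h2 : b.1 = 1 := by omega
          simp only [h2, Nat.div_eq_of_lt (show 1 + 1 < t by omega)] at this
          omega
        · have := h ⟨a.1 - 1, by omega⟩
          simp only at this
          omega
      rcases lt_trichotomy a.1 b.1 with h | h | h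
      · exact pp a b h hP
      · exact hne (by congr 1; exact Fin.ext h)
      · exact pp b a h fun i => (hP i).symm
    · exact ps a b hP
    · exact ps b a fun i => (hP i).symm
    · have := (hP a).1 (by rw [P_mem_nb_S])
      rw [P_mem_nb_S] at this
      exact hne (by rw [this])

theorem lower (hm : 1 ≤ m) (C : Set (Vx t m k)) (hC : IsIDCode (T t m k) C) :
    t * (m * k + 1) ≤ C.ncard := by
  classical
  obtain ⟨hdom, hsep⟩ := hC
  -- if a leaf is missing, its centre is present
  have hmiss : ∀ i j l, L i j l ∉ C → U i j ∈ C ∧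
      closedNbhd (T t m k) (L i j l) ∩ C = {U i j} := by
    intro i j l h
    have hU : U i j ∈ C := by
      obtain ⟨v, hv, hvC⟩ := hdom (L i j l)
      rw [mem_nb_L] at hv
      rcases hv with rfl | rfl
      · exact absurd hvC h
      · exact hvC
    refine ⟨hU, ?_⟩
    ext v
    rw [Set.mem_inter_iff, mem_nb_L, Set.mem_singleton_iff]
    constructor
    · rintro ⟨rfl | rfl, hv⟩
      · exact absurd hv h
      · rfl
    · rintro rfl
      exact ⟨Or.inr rfl, hU⟩
  set χ : Vx t m k → ℕ := fun v => if v ∈ C then 1 else 0 with hχ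
  have full : ∀ i j, (∀ l, L i j l ∈ C) → ∑ l, χ (L i j l) = k := by
    intro i j h
    simp [hχ, h]
  have star : ∀ i j, k ≤ χ (U i j) + ∑ l, χ (L i j l) := by
    intro i j
    by_cases h : ∀ l, L i j l ∈ C
    · rw [full i j h]; omega
    · push Not at h
      obtain ⟨l, hl⟩ := h
      obtain ⟨hU, hN⟩ := hmiss i j l hl
      have hrest : ∀ l' ∈ Finset.univ.erase l, 1 ≤ χ (L i j l') := by
        intro l' hl'
        have hne : l' ≠ l := Finset.ne_of_mem_erase hl'
        by_cases h' : L i j l' ∈ C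
        · simp [hχ, h']
        · exfalso
          refine hsep (L i j l') (L i j l) (by simpa using hne) ?_
          rw [hN, (hmiss i j l' h').2]
      have h1 := Finset.card_nsmul_le_sum _ _ _ hrest
      have h2 : ∑ l' ∈ Finset.univ.erase l, χ (L i j l') ≤ ∑ l, χ (L i j l) :=
        Finset.sum_le_sum_of_subset (Finset.erase_subset _ _)
      rw [Finset.card_erase_of_mem (Finset.mem_univ _), Finset.card_univ, Fintype.card_fin] at h1
      have h3 : χ (U i j) = 1 := by simp [hχ, hU]
      have := l.2
      simp only [smul_eq_mul, mul_one] at h1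
      omega
  have block : ∀ i, m * k + 1 ≤
      χ (P i) + χ (S i) + ∑ j, (χ (U i j) + ∑ l, χ (L i j l)) := by
    intro i
    have hconst : ∑ _j : Fin m, k = m * k := by simp
    by_cases h : P i ∈ C ∨ S i ∈ C
    · have h1 : 1 ≤ χ (P i) + χ (S i) := by
        rcases h with h | h <;> simp [hχ, h]
      have h2 := Finset.sum_le_sum fun j (_ : j ∈ Finset.univ) => star i j
      rw [hconst] at h2
      omega
    · push Not at h
      obtain ⟨hP, hS⟩ := h
      have hU : U i ⟨0, hm⟩ ∈ C := by
        obtain ⟨v, hv, hvC⟩ := hdom (S i)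
        rw [mem_nb_S hm] at hv
        rcases hv with rfl | rfl | rfl
        · exact absurd hvC hS
        · exact absurd hvC hP
        · exact hvC
      have hfull : ∀ l, L i ⟨0, hm⟩ l ∈ C := by
        intro l
        by_contra hl
        refine hsep (L i ⟨0, hm⟩ l) (S i) (by simp) ?_
        rw [(hmiss _ _ _ hl).2]
        ext v
        rw [Set.mem_inter_iff, mem_nb_S hm, Set.mem_singleton_iff]
        constructor
        · rintro rfl
          exact ⟨Or.inr (Or.inr rfl), hU⟩
        · rintro ⟨rfl | rfl | rfl, hv⟩
          · exact absurd hv hS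
          · exact absurd hv hP
          · rfl
      have h2 := Finset.sum_lt_sum (fun j (_ : j ∈ Finset.univ) => star i j)
        ⟨⟨0, hm⟩, Finset.mem_univ _, by
          rw [full _ _ hfull]
          have : χ (U i ⟨0, hm⟩) = 1 := by simp [hχ, hU]
          omega⟩
      rw [hconst] at h2
      omega
  have hsum := Finset.sum_le_sum fun i (_ : i ∈ Finset.univ) => block i
  rw [← sum_eq χ] at hsum
  rw [ncard_eq_sum]
  rw [Finset.sum_const, Finset.card_univ, Fintype.card_fin, smul_eq_mul] at hsum
  exact hsum

theorem code_transport {V W : Type} {G : SimpleGraph V} {H : SimpleGraph W} (e : G ≃g H)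
    {C : Set W} (hC : IsIDCode H C) : IsIDCode G (e ⁻¹' C) := by
  have hpre : ∀ v, closedNbhd G v ∩ e ⁻¹' C = e ⁻¹' (closedNbhd H (e v) ∩ C) := by
    intro v
    ext w
    simp [closedNbhd, e.map_adj_iff]
  constructor
  · intro v
    rw [hpre]
    obtain ⟨w, hw⟩ := hC.1 (e v)
    exact ⟨e.symm w, by simpa using hw⟩
  · intro u w hne h
    rw [hpre, hpre] at h
    exact hC.2 (e u) (e w) (fun h => hne (e.injective h)) (Set.preimage_injective.2 e.surjective h)

theorem ncard_transport {V W : Type} {G : SimpleGraph V} {H : SimpleGraph W} (e : G ≃g H)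
    (C : Set W) : (e ⁻¹' C).ncard = C.ncard :=
  Set.ncard_preimage_of_injective_subset_range e.injective (by simp [e.surjective.range_eq])

theorem deg_transport {V W : Type} {G : SimpleGraph V} {H : SimpleGraph W} (e : G ≃g H)
    (v : V) : (G.neighborSet v).ncard = (H.neighborSet (e v)).ncard := by
  rw [← ncard_transport e]
  congr 1
  ext w
  simp [e.map_adj_iff]

theorem idNum_eq {V : Type} [Fintype V] (G : SimpleGraph V) (n : ℕ)
    (h1 : ∃ C : Set V, C.ncard = n ∧ IsIDCode G C) (h2 : ∀ C, IsIDCode G C → n ≤ C.ncard) :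
    idNum G = n := by
  refine le_antisymm (Nat.sInf_le h1) (le_csInf ⟨n, h1⟩ ?_)
  rintro _ ⟨C, rfl, hC⟩
  exact h2 C hC

end Vx

open Vx in
theorem exists_tree (t m k N : ℕ) (ht : 3 ≤ t) (hm : 1 ≤ m) (hk : 2 ≤ k) (hmk : m + 1 ≤ k)
    (hN : N = t * (2 + m * (k + 1))) : ∃ G : SimpleGraph (Fin N),
    G.IsTree ∧ maxDeg G = k + 1 ∧ idNum G = t * (m * k + 1) := by
  have hcard : Fintype.card (Vx t m k) = Fintype.card (Fin N) := by
    rw [card_eq, hN, Fintype.card_fin]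
  let e0 : Vx t m k ≃ Fin N := Fintype.equivOfCardEq hcard
  let e : T t m k ≃g (T t m k).map e0.toEmbedding := SimpleGraph.Iso.map e0 _
  refine ⟨(T t m k).map e0.toEmbedding, e.isTree_iff.1 (T_isTree (by omega)), ?_, ?_⟩
  · refine le_antisymm (Finset.sup_le fun v _ => ?_) ?_
    · rw [deg_transport e.symm]
      exact T_deg_le hm hmk _
    · rw [← T_center (t := t) (m := m) (k := k) ⟨0, by omega⟩ ⟨0, hm⟩, deg_transport e]
      exact Finset.le_sup (f := fun v => (((T t m k).map e0.toEmbedding).neighborSet v).ncard)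
        (Finset.mem_univ _)
  · apply idNum_eq
    · exact ⟨_, (ncard_transport e.symm _).trans code_ncard,
        code_transport e.symm (code_isIDCode ht hk)⟩
    · intro C hC
      rw [← ncard_transport e]
      exact lower hm _ (code_transport e hC)

/-- for all `Δ ≥ 4` and `t ≥ 3` there is a tree `G` of order
`n = t(Δ−2)Δ + 2t` with maximum degree `Δ` and
`γ^ID(G) = t((Δ−2)(Δ−1) + 1) > ((Δ−1)/Δ)·n − n/Δ²`. -/
theorem stmt_16 (Δ t : ℕ) (hΔ : 4 ≤ Δ) (ht : 3 ≤ t) :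
    ∃ G : SimpleGraph (Fin (t * ((Δ - 2) * Δ) + 2 * t)),
      G.IsTree ∧ maxDeg G = Δ ∧
      idNum G = t * ((Δ - 2) * (Δ - 1) + 1) ∧
      (idNum G : ℝ) >
        ((Δ : ℝ) - 1) / Δ * ((t * ((Δ - 2) * Δ) + 2 * t : ℕ) : ℝ) -
          ((t * ((Δ - 2) * Δ) + 2 * t : ℕ) : ℝ) / (Δ : ℝ) ^ 2 := by
  obtain ⟨d, rfl⟩ : ∃ d, Δ = d + 2 := ⟨Δ - 2, by omega⟩
  have e1 : d + 2 - 2 = d := by omega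
  have e2 : d + 2 - 1 = d + 1 := by omega
  rw [e1, e2]
  obtain ⟨G, hT, hD, hI⟩ := exists_tree t d (d + 1) (t * (d * (d + 2)) + 2 * t) ht (by omega)
    (by omega) le_rfl (by ring)
  refine ⟨G, hT, hD, hI, ?_⟩
  rw [hI]
  have ht' : (0 : ℝ) < t := by exact_mod_cast (by omega : 0 < t)
  have hd : (0 : ℝ) < (d : ℝ) + 2 := by positivity
  push_cast
  rw [gt_iff_lt, ← sub_pos]
  have : (t : ℝ) * (d * (d + 1) + 1) - (((d : ℝ) + 2 - 1) / (d + 2) * (t * (d * (d + 2)) + 2 * t) -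
      (t * (d * (d + 2)) + 2 * t) / (d + 2) ^ 2) = 2 * t / (d + 2) ^ 2 := by
    field_simp
    ring
  rw [this]
  positivity
end

section
/- For every integer Δ ≥ 3, let G be the double star on n = 2Δ vertices consisting of two adjacent vertices u and w, with u additionally adjacent to Δ−1 leaves and w additionally adjacent to Δ−1 other leaves. Then γ^ID(G) = 2Δ − 2 = ((Δ−1)/Δ)·n. -/
open SimpleGraph

/-- The double star on `2Δ` vertices: the two centers are `(false, 0)` and `(true, 0)`,
which are adjacent, and each center `(c, 0)` is adjacent to the `Δ − 1` leaves
`(c, i)` with `i ≠ 0`. -/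
def doubleStar (Δ : ℕ) : SimpleGraph (Bool × Fin Δ) :=
  SimpleGraph.fromRel fun a b =>
    (a.2.val = 0 ∧ b.2.val = 0) ∨ (a.2.val = 0 ∧ a.1 = b.1)

theorem mem_cn (Δ : ℕ) (v x : Bool × Fin Δ) :
    x ∈ closedNbhd (doubleStar Δ) v ↔ x = v ∨
      (v.2.val = 0 ∧ x.2.val = 0) ∨ (v.2.val = 0 ∧ v.1 = x.1) ∨ (x.2.val = 0 ∧ x.1 = v.1) := by
  simp only [closedNbhd, doubleStar, Set.mem_insert_iff, SimpleGraph.mem_neighborSet,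
    SimpleGraph.fromRel_adj]
  by_cases h : x = v
  · simp [h]
  · have h' : v ≠ x := fun e => h e.symm
    simp only [h, h', false_or, ne_eq, not_false_eq_true, true_and]
    tauto

theorem compl_inj (Δ : ℕ) (C : Set (Bool × Fin Δ)) (hC : IsIDCode (doubleStar Δ) C) :
    Set.InjOn Prod.fst Cᶜ := by
  obtain ⟨h1, h2⟩ := hC
  -- a center and a leaf on the same side cannot both be missing
  have key : ∀ a b : Bool × Fin Δ, a ∉ C → b ∉ C → a.1 = b.1 → a.2.val = 0 → a = b := by
    rintro ⟨a1, a2⟩ ⟨b1, b2⟩ ha hb hab h0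
    simp only at hab h0
    subst hab
    by_contra hne
    have hb0 : b2.val ≠ 0 := by
      intro hb0
      exact hne (by rw [Prod.mk.injEq]; exact ⟨rfl, Fin.ext (by omega)⟩)
    obtain ⟨⟨x1, x2⟩, hx, hxC⟩ := h1 (a1, b2)
    rw [mem_cn] at hx
    simp only [hb0, false_and, false_or] at hx
    rcases hx with hx | ⟨hx, hx'⟩
    · exact hb (hx ▸ hxC)
    · have : x2 = a2 := Fin.ext (by omega)
      subst this hx'
      exact ha hxC
  intro a ha b hb hab
  by_cases ha0 : a.2.val = 0
  · exact key a b ha hb hab ha0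
  by_cases hb0 : b.2.val = 0
  · exact (key b a hb ha hab.symm hb0).symm
  by_contra hne
  apply h2 a b hne
  ext x
  simp only [Set.mem_inter_iff, mem_cn, ha0, hb0, false_and, false_or, hab]
  constructor
  · rintro ⟨rfl | h, hx⟩
    · exact absurd hx ha
    · exact ⟨Or.inr h, hx⟩
  · rintro ⟨rfl | h, hx⟩
    · exact absurd hx hb
    · exact ⟨Or.inr h, hx⟩

theorem leaves_code (Δ : ℕ) (hΔ : 3 ≤ Δ) :
    IsIDCode (doubleStar Δ) {p | p.2.val ≠ 0} := by
  constructor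
  · rintro ⟨c, i⟩
    by_cases hi : i.val = 0
    · exact ⟨(c, ⟨1, by omega⟩), by rw [mem_cn]; simp [hi], by simp⟩
    · exact ⟨(c, i), by rw [mem_cn]; simp, by simpa using hi⟩
  · rintro ⟨c, i⟩ ⟨d, j⟩ hne heq
    have H : ∀ x : Bool × Fin Δ, x.2.val ≠ 0 →
        ((x = (c, i) ∨ (i.val = 0 ∧ c = x.1)) ↔ (x = (d, j) ∨ (j.val = 0 ∧ d = x.1))) := by
      intro x hx
      have := Set.ext_iff.1 heq x
      simpa [mem_cn, hx] using this
    have H1 := fun e => H (e, ⟨1, by omega⟩) (by simp)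
    have H2 := fun e => H (e, ⟨2, by omega⟩) (by simp)
    have A1 := H1 c
    have A2 := H2 c
    have B1 := H1 d
    have B2 := H2 d
    have Hi := H (c, i)
    have Hj := H (d, j)
    simp only [Prod.mk.injEq, Fin.ext_iff] at A1 A2 B1 B2 Hi Hj
    have hne' : ¬ (c = d ∧ i.val = j.val) := by
      simpa [Prod.mk.injEq, Fin.ext_iff] using hne
    grind

theorem idNum_eq (Δ : ℕ) (hΔ : 3 ≤ Δ) : idNum (doubleStar Δ) = 2 * Δ - 2 := by
  have low : ∀ C : Set (Bool × Fin Δ), IsIDCode (doubleStar Δ) C → 2 * Δ - 2 ≤ C.ncard := by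
    intro C hC
    have h1 := Set.ncard_add_ncard_compl C
    have h2 : (Cᶜ).ncard ≤ 2 := by
      rw [← Set.ncard_image_of_injOn (compl_inj Δ C hC)]
      calc _ ≤ (Set.univ : Set Bool).ncard := Set.ncard_le_ncard (Set.subset_univ _)
        _ = 2 := by simp [Set.ncard_univ]
    simp only [Nat.card_eq_fintype_card, Fintype.card_prod, Fintype.card_bool,
      Fintype.card_fin] at h1
    omega
  have hcard : ({p | p.2.val ≠ 0} : Set (Bool × Fin Δ)).ncard = 2 * Δ - 2 := by
    have h1 := Set.ncard_add_ncard_compl ({p | p.2.val ≠ 0} : Set (Bool × Fin Δ))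
    have h2 : ({p | p.2.val ≠ 0} : Set (Bool × Fin Δ))ᶜ =
        {(false, ⟨0, by omega⟩), (true, ⟨0, by omega⟩)} := by
      ext ⟨c, i⟩
      cases c <;> simp [Fin.ext_iff]
    rw [h2, Set.ncard_pair (by simp)] at h1
    simp only [Nat.card_eq_fintype_card, Fintype.card_prod, Fintype.card_bool,
      Fintype.card_fin] at h1
    omega
  apply le_antisymm
  · exact Nat.sInf_le ⟨_, hcard, leaves_code Δ hΔ⟩
  · refine le_csInf ⟨_, _, hcard, leaves_code Δ hΔ⟩ ?_
    rintro k ⟨C, rfl, hC⟩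
    exact low C hC

/-- for `Δ ≥ 3`, the double star `G` on `n = 2Δ` vertices satisfies
`γ^ID(G) = 2Δ − 2 = ((Δ−1)/Δ)·n`. -/
theorem stmt_17 (Δ : ℕ) (hΔ : 3 ≤ Δ) :
    idNum (doubleStar Δ) = 2 * Δ - 2 ∧
    (idNum (doubleStar Δ) : ℝ) = ((Δ : ℝ) - 1) / Δ * (2 * (Δ : ℝ)) := by
  refine ⟨idNum_eq Δ hΔ, ?_⟩
  rw [idNum_eq Δ hΔ, Nat.cast_sub (by omega)]
  have : (Δ : ℝ) ≠ 0 := by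
    have : Δ ≠ 0 := by omega
    exact_mod_cast this
  push_cast
  field_simp
end
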